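/- Let p ≥ 11 be a prime. Define S_6^{(m)}(p²) as the sum of 1/(l_1⋯l_6) over 6-tuples of positive integers with l_1+⋯+l_6 = m·p², each l_i < p² and coprime to p. Then S_6^{(1)}(p²) ≡ -(20/3)·p·B_{p-3}² (mod p²), S_6^{(2)}(p²) ≡ (80/3)·p·B_{p-3}² (mod p²), and S_6^{(3)}(p²) ≡ -40·p·B_{p-3}² (mod p²). -/

import Mathlib

/-- `x ≡ y (mod p^r)` as p-integral rationals. -/
def ratCong (p r : ℕ) (x y : ℚ) : Prop :=
  ∃ z : ℚ, x - y = (p : ℚ) ^ r * z ∧ ¬ (p ∣ z.den)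

/-- `S₆^{(m)}(B)`: sum of `1/(l₁⋯l₆)` over positive 6-tuples summing to `N`,
with each `lᵢ < B` and coprime to `p`. -/
def S6 (p B N : ℕ) : ℚ :=
  ∑ l ∈ (Fintype.piFinset fun _ : Fin 6 => Finset.Ico 1 B) |>.filter
      (fun l => ∑ i, l i = N ∧ ∀ i, ¬ p ∣ l i),
    ∏ i, (1 : ℚ) / l i

/-!
The sum `S6 p B N` is the coefficient of `X ^ N` in the sixth power of the truncated logarithm
`F = ∑_{l < B, p ∤ l} X ^ l / l`, so for `B = p ^ 2` only the coefficients at multiples of `p ^ 2`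
matter.

Modulo `p`, with `B = p`, write `P_n = contract p (F ^ n)`, which keeps the coefficients at
multiples of `p`. Since `X (1 - X) F' = X - X ^ p`, the series `exp (t F)` solves a first order
differential equation, from which `contract p (exp (t F)) * contract p (exp (-t F)) = 1`. Comparing
powers of `t` gives `P_6 = 10 P_3 ^ 2`. As `F` is anti-palindromic, `P_3` is a multiple of
`X - X ^ 2`, and Faulhaber's formula evaluates the multiple as `-2 B_{p-3}`.

Modulo `p ^ 2`, the expansion `1 / (a p + l) = 1 / l - a p / l ^ 2` writes `F` for `B = p ^ 2` in
terms of `F` for `B = p`, its dilogarithmic analogue, and geometric sums in `X ^ p`. The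
coefficients of these sums at multiples of `p` are binomials divisible by `p`: hence the
dilogarithmic terms vanish, and `P_6` is only needed modulo `p`.
-/

open Polynomial hiding bernoulli
open Finset
open scoped Nat Ring

section Contract
variable {p : ℕ} {A : Type*} [CommRing A]

lemma X_mul_derivative_X_pow (n : ℕ) :
    X * derivative (X ^ n : A[X]) = C (n : A) * X ^ n := by
  rcases n with - | n
  · simp
  · rw [derivative_X_pow, Nat.add_sub_cancel]; ring

lemma coeff_X_mul_derivative (f : A[X]) (n : ℕ) :
    (X * derivative f).coeff n = n * f.coeff n := by
  rcases n with - | n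
  · simp
  · rw [coeff_X_mul, coeff_derivative, mul_comm, Nat.cast_succ]

lemma contract_smul {S : Type*} [SMulZeroClass S A] (hp : p ≠ 0) (c : S) (f : A[X]) :
    contract p (c • f) = c • contract p f := by
  ext k
  simp only [coeff_contract hp, coeff_smul]

lemma contract_C_mul (hp : p ≠ 0) (a : A) (f : A[X]) :
    contract p (C a * f) = C a * contract p f := by
  simp only [← smul_eq_C_mul, contract_smul hp]

lemma contract_sum {ι : Type*} (hp : p ≠ 0) (s : Finset ι) (f : ι → A[X]) :
    contract p (∑ i ∈ s, f i) = ∑ i ∈ s, contract p (f i) := by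
  ext k
  simp only [coeff_contract hp, finsetSum_coeff]

lemma contract_X_mul_derivative [CharP A p] (hp : p ≠ 0) (f : A[X]) :
    contract p (X * derivative f) = 0 := by
  ext k
  rw [coeff_contract hp, coeff_X_mul_derivative, Nat.cast_mul, CharP.cast_eq_zero A p, mul_zero,
    zero_mul, coeff_zero]

lemma contract_X_pow_mul (hp : p ≠ 0) (k : ℕ) (f : A[X]) :
    contract p (X ^ (p * k) * f) = X ^ k * contract p f := by
  rw [mul_comm, pow_mul, ← expand_X, ← map_pow, contract_mul_expand hp, mul_comm]

lemma contract_X_pow (hp : p ≠ 0) (k : ℕ) : contract p (X ^ (p * k) : A[X]) = X ^ k := by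
  rw [← mul_one (X ^ (p * k)), contract_X_pow_mul hp, ← C_1, contract_C, C_1, mul_one]

lemma contract_X_pow_of_not_dvd (hp : p ≠ 0) {n : ℕ} (hn : ¬ p ∣ n) :
    contract p (X ^ n : A[X]) = 0 := by
  ext k
  rw [coeff_contract hp, coeff_X_pow, if_neg (fun h => hn ⟨k, by rw [← h, mul_comm]⟩), coeff_zero]

lemma X_mul_contract_mul (hp : p ≠ 0) (f g : A[X]) :
    X * contract p (f * g) =
      ∑ i ∈ range p, contract p (X ^ (p - (i + 1)) * f) * contract p (X ^ (i + 1) * g) := by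
  induction f using Polynomial.induction_on' with
  | add f₁ f₂ h₁ h₂ => simp only [add_mul, mul_add, contract_add hp, h₁, h₂, sum_add_distrib]
  | monomial a c =>
    have hmonomial (i : ℕ) :
        contract p (X ^ i * monomial a c) = C c * contract p (X ^ (i + a)) := by
      rw [← contract_C_mul hp, ← C_mul_X_pow_eq_monomial, pow_add, mul_left_comm]
    obtain ⟨k, r, hr, hkr⟩ : ∃ k r, r < p ∧ a + p = p * k + (r + 1) :=
      ⟨(a + p - 1) / p, (a + p - 1) % p, Nat.mod_lt _ (Nat.pos_of_ne_zero hp), by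
        have := Nat.div_add_mod (a + p - 1) p; lia⟩
    have hshift : X ^ (p * 1) * (monomial a c * g) = C c * (X ^ (p * k) * (X ^ (r + 1) * g)) := by
      have hpow : (X : A[X]) ^ (p * 1) * X ^ a = X ^ (p * k) * X ^ (r + 1) := by
        rw [← pow_add, ← pow_add, ← hkr, mul_one, add_comm]
      rw [← C_mul_X_pow_eq_monomial]
      linear_combination C c * g * hpow
    rw [sum_eq_single_of_mem r (mem_range.mpr hr)]
    · rw [hmonomial, show p - (r + 1) + a = p * k by lia, contract_X_pow hp, mul_assoc,
        ← contract_X_pow_mul hp, ← contract_C_mul hp, ← hshift, contract_X_pow_mul hp, pow_one]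
    · intro i hi hne
      rw [hmonomial, contract_X_pow_of_not_dvd hp, mul_zero, zero_mul]
      rintro ⟨l, hl⟩
      have hip := mem_range.mp hi
      have hdigits : p * l + i = p * k + r := by lia
      have hmod := congrArg (· % p) hdigits
      simp only [Nat.mul_add_mod, Nat.mod_eq_of_lt hip, Nat.mod_eq_of_lt hr] at hmod
      exact hne hmod

end Contract

section Reciprocity
variable {p : ℕ} {A : Type*} [CommRing A]

lemma isUnit_natCast_zmod [Fact p.Prime] {l : ℕ} (hl : l ∈ Ico 1 p) : IsUnit (l : ZMod p) := by
  rw [isUnit_iff_ne_zero, Ne, ZMod.natCast_eq_zero_iff]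
  exact Nat.not_dvd_of_pos_of_lt (mem_Ico.mp hl).1 (mem_Ico.mp hl).2

lemma sum_Ico_natCast_pow [Fact p.Prime] (k : ℕ) :
    ∑ i ∈ Ico 1 p, (i : ZMod p) ^ k = if p - 1 ∣ k then -1 else 0 := by
  have hunits := FiniteField.sum_pow_units (ZMod p) k
  rw [ZMod.card] at hunits
  rw [← hunits]
  refine sum_bij (fun i hi => (isUnit_natCast_zmod hi).unit) (fun _ _ => mem_univ _)
    (fun i hi j hj hij => ?_) (fun x _ => ⟨(x : ZMod p).val, ?_, ?_⟩) (fun _ _ => rfl)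
  · have hval := congrArg ZMod.val (congrArg Units.val hij)
    simpa only [IsUnit.unit_spec, ZMod.val_natCast_of_lt (mem_Ico.mp hi).2,
      ZMod.val_natCast_of_lt (mem_Ico.mp hj).2] using hval
  · exact mem_Ico.mpr ⟨Nat.pos_of_ne_zero ((ZMod.val_ne_zero _).mpr x.ne_zero), ZMod.val_lt _⟩
  · exact Units.ext (ZMod.natCast_zmod_val _)

lemma natCast_add_mul_sum_pow_eq_one [Fact p.Prime] [CharP A p] {u : A} (hu : u ^ (p - 1) = 0)
    {i : ℕ} (hi : i ∈ Ico 1 p) :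
    (i + u) * ∑ k ∈ range (p - 1), (i : A) ^ k * (-u) ^ (p - 1 - 1 - k) = 1 := by
  have hfermat : (i : A) ^ (p - 1) = 1 := by
    rw [← map_natCast (ZMod.castHom dvd_rfl A), ← map_pow,
      ZMod.pow_card_sub_one_eq_one (isUnit_natCast_zmod hi).ne_zero, map_one]
  rw [← sub_neg_eq_add, mul_comm, geom_sum₂_mul, hfermat, neg_pow, hu, mul_zero, sub_zero]

lemma isUnit_natCast_add [Fact p.Prime] [CharP A p] {u : A} (hu : u ^ (p - 1) = 0) {i : ℕ}
    (hi : i ∈ Ico 1 p) : IsUnit (i + u) :=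
  .of_mul_eq_one _ (natCast_add_mul_sum_pow_eq_one hu hi)

lemma mul_sum_inverse_natCast_add_eq_zero [Fact p.Prime] [CharP A p] {u : A}
    (hu : u ^ (p - 1) = 0) : u * ∑ i ∈ Ico 1 p, (i + u)⁻¹ʳ = 0 := by
  have hp := (Fact.out : p.Prime).two_le
  have hinverse : ∀ i ∈ Ico 1 p,
      (i + u)⁻¹ʳ = ∑ k ∈ range (p - 1), (i : A) ^ k * (-u) ^ (p - 1 - 1 - k) := fun i hi => by
    rw [← mul_one (i + u)⁻¹ʳ, ← natCast_add_mul_sum_pow_eq_one hu hi,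
      Ring.inverse_mul_cancel_left _ _ (isUnit_natCast_add hu hi)]
  rw [sum_congr rfl hinverse, sum_comm, mul_sum]
  refine sum_eq_zero fun k hk => ?_
  rw [← sum_mul, mul_left_comm]
  rcases k.eq_zero_or_pos with rfl | hk0
  · have hpow : u * (-u) ^ (p - 1 - 1 - 0) = 0 := by
      rw [neg_pow, mul_left_comm, ← pow_succ', Nat.sub_zero, Nat.sub_add_cancel (by lia), hu,
        mul_zero]
    rw [hpow, mul_zero]
  · have hsum := congrArg (ZMod.castHom dvd_rfl A) (sum_Ico_natCast_pow (p := p) k)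
    rw [if_neg (Nat.not_dvd_of_pos_of_lt hk0 (mem_range.mp hk)), map_sum] at hsum
    simp only [map_pow, map_natCast, map_zero] at hsum
    rw [hsum, zero_mul]

/-- The differential equation satisfied by `exp (t * F)`, where `F = ∑_{0 < l < p} X ^ l / l`. -/
def IsLogExp (p : ℕ) (t : A) (f : A[X]) : Prop :=
  X * (1 - X) * derivative f = C t * (X - X ^ p) * f

lemma IsLogExp.contract_recurrence [CharP A p] (hp : p ≠ 0) {t : A} {f : A[X]}
    (hf : IsLogExp p t f) (i : ℕ) :
    ((i : A[X]) - C t * X) * contract p (X ^ i * f) =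
      ((i : A[X]) + 1 - C t) * contract p (X ^ (i + 1) * f) := by
  have hder : X * derivative (X ^ i * (1 - X) * f) + C (i + 1 : A) * (X ^ (i + 1) * f)
        + C t * (X ^ (p * 1) * (X ^ i * f)) =
      C (i : A) * (X ^ i * f) + C t * (X ^ (i + 1) * f) := by
    rw [IsLogExp] at hf
    simp only [derivative_mul, map_sub, derivative_one, derivative_X, map_add, map_one]
    linear_combination (1 - X) * f * X_mul_derivative_X_pow (A := A) i + X ^ i * hf
  have hcontract := congrArg (contract p) hder
  simp only [contract_add hp, contract_X_mul_derivative hp, contract_C_mul hp,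
    contract_X_pow_mul hp] at hcontract
  simp only [map_add, map_natCast, map_one] at hcontract
  linear_combination -hcontract

lemma IsLogExp.contract_invariant [CharP A p] (hp : p ≠ 0) {t : A} {f g : A[X]}
    (hf : IsLogExp p t f) (hg : IsLogExp p (-t) g) {i : ℕ} (hi : i ≤ p) :
    ((i : A[X]) + C t) * ((i : A[X]) + C t * X) *
        (contract p (X ^ (p - i) * f) * contract p (X ^ i * g)) =
      (C t * X) ^ 2 * (contract p f * contract p g) := by
  -- By the two recurrences, the left-hand side does not depend on `i`.
  induction i with
  | zero =>
    have hwrap := contract_X_pow_mul hp 1 f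
    rw [mul_one, pow_one] at hwrap
    rw [Nat.sub_zero, hwrap, pow_zero, one_mul, Nat.cast_zero, zero_add, zero_add]
    ring
  | succ i ih =>
    have hfi := hf.contract_recurrence hp (p - (i + 1))
    have hgi := hg.contract_recurrence hp i
    rw [show p - (i + 1) + 1 = p - i by lia,
      Nat.cast_sub hi, CharP.cast_eq_zero A[X] p] at hfi
    rw [← ih (by lia)]
    push_cast [C_neg] at hfi hgi ⊢
    linear_combination (-((i : A[X]) + C t * X) * contract p (X ^ i * g)) * hfi -
      (((i : A[X]) + 1 + C t * X) * contract p (X ^ (p - (i + 1)) * f)) * hgi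

lemma IsLogExp.sum_contract_mul_contract_eq_zero [Fact p.Prime] [CharP A p] {t : A}
    (ht : t ^ (p - 1) = 0) {f g : A[X]} (hf : IsLogExp p t f) (hg : IsLogExp p (-t) g) :
    ∑ i ∈ Ico 1 p, contract p (X ^ (p - i) * f) * contract p (X ^ i * g) = 0 := by
  have hp := (Fact.out : p.Prime).ne_zero
  set U := contract p f * contract p g with hU
  have hnilp : (C t : A[X]) ^ (p - 1) = 0 := by rw [← C_pow, ht, C_0]
  have hnilp_mul : (C t * X : A[X]) ^ (p - 1) = 0 := by rw [mul_pow, hnilp, zero_mul]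
  -- Partial fractions applied to `contract_invariant`.
  have hpartial : ∀ i ∈ Ico 1 p,
      (X - C 1) * (contract p (X ^ (p - i) * f) * contract p (X ^ i * g)) =
        X ^ 2 * U * (C t * ((i : A[X]) + C t)⁻¹ʳ) -
          X * U * (C t * X * ((i : A[X]) + C t * X)⁻¹ʳ) := by
    intro i hi
    have h₁ := Ring.mul_inverse_cancel _ (isUnit_natCast_add hnilp hi)
    have h₂ := Ring.mul_inverse_cancel _ (isUnit_natCast_add hnilp_mul hi)
    have hinv := hf.contract_invariant hp hg (mem_Ico.mp hi).2.le
    rw [← hU] at hinv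
    generalize ((i : A[X]) + C t)⁻¹ʳ = v₁ at *
    generalize ((i : A[X]) + C t * X)⁻¹ʳ = v₂ at *
    generalize contract p (X ^ (p - i) * f) * contract p (X ^ i * g) = c at *
    rw [C_1]
    linear_combination (-(X - 1) * c * ((i : A[X]) + C t * X) * v₂ - C t * X ^ 2 * U * v₂) * h₁ +
      (C t * X ^ 2 * U * v₁ - (X - 1) * c) * h₂ + (X - 1) * v₁ * v₂ * hinv
  refine (monic_X_sub_C (1 : A)).isRegular.left ?_
  beta_reduce
  rw [mul_sum, sum_congr rfl hpartial, sum_sub_distrib, ← mul_sum, ← mul_sum, ← mul_sum,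
    ← mul_sum, mul_sum_inverse_natCast_add_eq_zero hnilp,
    mul_sum_inverse_natCast_add_eq_zero hnilp_mul, mul_zero, mul_zero, mul_zero, sub_zero]

theorem IsLogExp.contract_mul_contract_eq_one [Fact p.Prime] [CharP A p] {t : A}
    (ht : t ^ (p - 1) = 0) {f g : A[X]} (hf : IsLogExp p t f) (hg : IsLogExp p (-t) g)
    (hfg : f * g = 1) : contract p f * contract p g = 1 := by
  have hp := (Fact.out : p.Prime).pos
  have hwrap := contract_X_pow_mul hp.ne' 1 g
  rw [mul_one, pow_one] at hwrap
  have hfold := X_mul_contract_mul hp.ne' f g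
  rw [hfg, ← C_1, contract_C, range_eq_Ico,
    sum_Ico_add' (fun i => contract p (X ^ (p - i) * f) * contract p (X ^ i * g)) 0 p 1,
    zero_add, sum_Ico_succ_top hp, hf.sum_contract_mul_contract_eq_zero ht hg, hwrap, Nat.sub_self,
    pow_zero, one_mul, zero_add, mul_left_comm] at hfold
  exact (isRegular_X.left hfold).symm

end Reciprocity

section TruncExp
variable {p : ℕ} [Fact p.Prime] {S : Type*} [CommRing S] [Algebra (ZMod p) S]

variable (p) in
/-- The exponential series truncated at degree `p - 2`, for algebras over `ZMod p`. It turns sums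
into products on elements whose `(p - 1)`-st powers vanish. -/
noncomputable def truncExp (x : S) : S :=
  ∑ n ∈ range (p - 1), (n ! : ZMod p)⁻¹ • x ^ n

lemma natCast_factorial_ne_zero {n : ℕ} (hn : n < p) : (n ! : ZMod p) ≠ 0 := by
  rw [Ne, ZMod.natCast_eq_zero_iff, (Fact.out : p.Prime).dvd_factorial]
  exact hn.not_ge

lemma inv_factorial_mul_inv_factorial {n k : ℕ} (hn : n < p) (hk : k ≤ n) :
    (k ! : ZMod p)⁻¹ * ((n - k)! : ZMod p)⁻¹ = (n ! : ZMod p)⁻¹ * n.choose k := by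
  have hchoose : (n.choose k * k ! * (n - k)! : ZMod p) = n ! := by
    exact_mod_cast congrArg (Nat.cast (R := ZMod p)) (Nat.choose_mul_factorial_mul_factorial hk)
  have h₁ := natCast_factorial_ne_zero hn
  have h₂ := natCast_factorial_ne_zero (hk.trans_lt hn)
  have h₃ := natCast_factorial_ne_zero ((Nat.sub_le n k).trans_lt hn)
  field_simp
  linear_combination -hchoose

lemma sum_inv_factorial_mul_sum_inv_factorial {t : S} {N : ℕ} (hN : N ≤ p) (ht : t ^ N = 0)
    (a b : ℕ → S) :
    (∑ i ∈ range N, (i ! : ZMod p)⁻¹ • (t ^ i * a i)) *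
        ∑ j ∈ range N, (j ! : ZMod p)⁻¹ • (t ^ j * b j) =
      ∑ n ∈ range N, (n ! : ZMod p)⁻¹ •
        (t ^ n * ∑ k ∈ range (n + 1), a k * b (n - k) * n.choose k) := by
  have hdiag : ∀ n ∈ range N, ∀ k ∈ range (n + 1),
      (n ! : ZMod p)⁻¹ • (t ^ n * (a k * b (n - k) * n.choose k)) =
        ((k ! : ZMod p)⁻¹ • (t ^ k * a k)) *
          (((n - k)! : ZMod p)⁻¹ • (t ^ (n - k) * b (n - k))) := by
    intro n hn k hk
    obtain ⟨m, rfl⟩ := Nat.exists_eq_add_of_le (Nat.le_of_lt_succ (mem_range.mp hk))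
    rw [smul_mul_smul_comm,
      inv_factorial_mul_inv_factorial ((mem_range.mp hn).trans_le hN) (by lia), mul_smul,
      Nat.cast_smul_eq_nsmul, nsmul_eq_mul, Nat.add_sub_cancel_left]
    congr 1
    ring
  have hexpand (n : ℕ) : (n ! : ZMod p)⁻¹ •
        (t ^ n * ∑ k ∈ range (n + 1), a k * b (n - k) * n.choose k) =
      ∑ k ∈ range (n + 1), (n ! : ZMod p)⁻¹ • (t ^ n * (a k * b (n - k) * n.choose k)) := by
    rw [mul_sum, smul_sum]
  simp only [hexpand]
  rw [sum_congr rfl fun n hn => sum_congr rfl (hdiag n hn),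
    sum_range_diag_flip N fun i j =>
      ((i ! : ZMod p)⁻¹ • (t ^ i * a i)) * ((j ! : ZMod p)⁻¹ • (t ^ j * b j)),
    sum_mul_sum]
  refine sum_congr rfl fun i _ =>
    (sum_subset (range_subset_range.mpr (Nat.sub_le N i)) fun j _ hj => ?_).symm
  have hN : t ^ i * t ^ j = 0 := by
    rw [← pow_add]; exact pow_eq_zero_of_le (by rw [mem_range] at hj; lia) ht
  rw [smul_mul_smul_comm, mul_mul_mul_comm, hN, zero_mul, smul_zero]

lemma truncExp_mul_truncExp_neg {x : S} (hx : x ^ (p - 1) = 0) :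
    truncExp p x * truncExp p (-x) = 1 := by
  have hexp (y : S) :
      ∑ n ∈ range (p - 1), (n ! : ZMod p)⁻¹ • (x ^ n * y ^ n) = truncExp p (x * y) :=
    sum_congr rfl fun n _ => by rw [mul_pow]
  have hproduct := sum_inv_factorial_mul_sum_inv_factorial (Nat.sub_le p 1) hx (1 ^ ·) ((-1) ^ ·)
  simp only [← add_pow, add_neg_cancel] at hproduct
  rw [hexp, hexp, mul_one, mul_neg_one] at hproduct
  rw [hproduct, sum_eq_single_of_mem 0]
  · simp
  · have := (Fact.out : p.Prime).two_le
    exact mem_range.mpr (by lia)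
  · intro n _ hn
    rw [zero_pow hn, mul_zero, smul_zero]

lemma isLogExp_truncExp {t : S} (ht : t ^ (p - 1) = 0) {F : S[X]}
    (hF : X * (1 - X) * derivative F = X - X ^ p) : IsLogExp p t (truncExp p (C t * F)) := by
  obtain ⟨N, hN⟩ : ∃ N, p - 1 = N + 1 := ⟨p - 2, by have := (Fact.out : p.Prime).two_le; lia⟩
  have hterm : ∀ n ∈ range N,
      X * (1 - X) * derivative (((n + 1)! : ZMod p)⁻¹ • (C t * F) ^ (n + 1)) =
        C t * (X - X ^ p) * ((n ! : ZMod p)⁻¹ • (C t * F) ^ n) := by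
    intro n hn
    have hfactorial : (n ! : ZMod p)⁻¹ = ((n + 1)! : ZMod p)⁻¹ * (n + 1 : ℕ) := by
      have hne : ((n + 1 : ℕ) : ZMod p) ≠ 0 :=
        (isUnit_natCast_zmod (mem_Ico.mpr (by have := mem_range.mp hn; lia))).ne_zero
      rw [Nat.factorial_succ, Nat.cast_mul, mul_inv_rev, inv_mul_cancel_right₀ hne]
    rw [hfactorial, mul_smul, Nat.cast_smul_eq_nsmul, nsmul_eq_mul, derivative_smul,
      mul_smul_comm, mul_smul_comm, derivative_pow_succ, derivative_C_mul, ← hF]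
    congr 1
    rw [Nat.cast_succ, map_add, map_natCast, map_one]
    ring
  have hlast : C t * (C t * F) ^ N = 0 := by
    rw [mul_pow, ← mul_assoc, ← pow_succ', ← hN, ← C_pow, ht, C_0, zero_mul]
  rw [IsLogExp, truncExp, hN, derivative_sum, mul_sum, sum_range_succ', sum_congr rfl hterm,
    ← mul_sum, sum_range_succ, pow_zero, derivative_smul, derivative_one, smul_zero, mul_zero,
    add_zero, mul_add, mul_smul_comm, mul_right_comm _ _ ((C t * F) ^ N), hlast,
    zero_mul, smul_zero, add_zero]

lemma contract_truncExp (s : S) (F : S[X]) :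
    contract p (truncExp p (C s * F)) =
      ∑ n ∈ range (p - 1), (n ! : ZMod p)⁻¹ • (C s ^ n * contract p (F ^ n)) := by
  have hp := (Fact.out : p.Prime).ne_zero
  simp only [truncExp, contract_sum hp, contract_smul hp, mul_pow, ← C_pow, contract_C_mul hp]

lemma eq_zero_of_sum_root_pow_mul {K : Type*} [CommRing K] {N : ℕ} {a : ℕ → K} {b : K}
    (h : ∑ n ∈ range N, AdjoinRoot.root (X ^ N) ^ n * AdjoinRoot.of (X ^ N) (a n) =
      AdjoinRoot.of (X ^ N) b) {n : ℕ} (hn0 : 0 < n) (hn : n < N) : a n = 0 := by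
  have hmk : AdjoinRoot.mk (X ^ N) (∑ n ∈ range N, X ^ n * C (a n)) =
      AdjoinRoot.mk (X ^ N) (C b) := by
    simpa only [map_sum, map_mul, map_pow, AdjoinRoot.mk_X, AdjoinRoot.mk_C] using h
  have hcoeff := X_pow_dvd_iff.mp (AdjoinRoot.mk_eq_mk.mp hmk) n hn
  simpa only [coeff_sub, finsetSum_coeff, coeff_C, hn0.ne', if_false, sub_zero, coeff_mul_C,
    coeff_X_pow, ite_mul, one_mul, zero_mul, sum_ite_eq, mem_range, hn, if_true] using hcoeff

lemma sum_smul_pow_mul_sum_choose_mul_contract_eq_one [CharP S p] {t : S} (ht : t ^ (p - 1) = 0)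
    {F : S[X]} (hF : X * (1 - X) * derivative F = X - X ^ p) :
    ∑ n ∈ range (p - 1), (n ! : ZMod p)⁻¹ • (C t ^ n * ∑ k ∈ range (n + 1),
      contract p (F ^ k) * ((-1) ^ (n - k) * contract p (F ^ (n - k))) * n.choose k) = 1 := by
  have hexp : truncExp p (C t * F) * truncExp p (C (-t) * F) = 1 := by
    rw [map_neg, neg_mul]
    exact truncExp_mul_truncExp_neg (by rw [mul_pow, ← C_pow, ht, C_0, zero_mul])
  have hcontract := (isLogExp_truncExp ht hF).contract_mul_contract_eq_one ht
    (isLogExp_truncExp (t := -t) (by rw [neg_pow, ht, mul_zero]) hF) hexp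
  have hneg (n : ℕ) :
      C (-t) ^ n * contract p (F ^ n) = C t ^ n * ((-1) ^ n * contract p (F ^ n)) := by
    rw [map_neg, neg_pow]; ring
  simp only [contract_truncExp, hneg] at hcontract
  rwa [sum_inv_factorial_mul_sum_inv_factorial (Nat.sub_le p 1) (by rw [← C_pow, ht, C_0])]
    at hcontract

theorem sum_choose_mul_contract_pow_mul_contract_pow_eq_zero {F : (ZMod p)[X]}
    (hF : X * (1 - X) * derivative F = X - X ^ p) {n : ℕ} (hn0 : 0 < n) (hn : n < p - 1) :
    ∑ k ∈ range (n + 1),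
      contract p (F ^ k) * ((-1) ^ (n - k) * contract p (F ^ (n - k))) * n.choose k = 0 := by
  have hp := (Fact.out : p.Prime).ne_zero
  -- Coefficients are separated by adjoining a generic `t` with `t ^ (p - 1) = 0`.
  let Q : (ZMod p)[X] := X ^ (p - 1)
  let t := AdjoinRoot.root Q
  have ht : t ^ (p - 1) = 0 := by
    rw [show t = AdjoinRoot.mk Q X from rfl, ← map_pow]; exact AdjoinRoot.mk_self
  have : Nontrivial (AdjoinRoot Q) := AdjoinRoot.nontrivial _ (by
    rw [degree_X_pow]; exact_mod_cast (by lia : p - 1 ≠ 0))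
  have : CharP (AdjoinRoot Q) p := charP_of_injective_algebraMap' (ZMod p) p
  have hode := congrArg (Polynomial.map (AdjoinRoot.of Q)) hF
  simp only [Polynomial.map_mul, Polynomial.map_sub, Polynomial.map_pow, Polynomial.map_one, map_X,
    ← derivative_map] at hode
  have hsum := sum_smul_pow_mul_sum_choose_mul_contract_eq_one ht hode
  let D (n : ℕ) : (ZMod p)[X] := ∑ k ∈ range (n + 1),
    contract p (F ^ k) * ((-1) ^ (n - k) * contract p (F ^ (n - k))) * n.choose k
  have hD (n : ℕ) : ∑ k ∈ range (n + 1),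
      contract p (F.map (AdjoinRoot.of Q) ^ k) *
        ((-1) ^ (n - k) * contract p (F.map (AdjoinRoot.of Q) ^ (n - k))) * n.choose k =
        (D n).map (AdjoinRoot.of Q) := by
    simp only [D, map_contract hp, Polynomial.map_sum, Polynomial.map_mul, Polynomial.map_pow,
      Polynomial.map_neg, Polynomial.map_one, Polynomial.map_natCast]
  ext j
  have hcoeff : ∑ n ∈ range (p - 1), t ^ n * AdjoinRoot.of Q ((n ! : ZMod p)⁻¹ * (D n).coeff j) =
      AdjoinRoot.of Q ((1 : (ZMod p)[X]).coeff j) := by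
    rw [← coeff_map, Polynomial.map_one, ← hsum, finsetSum_coeff]
    refine sum_congr rfl fun n _ => ?_
    rw [hD, coeff_smul, ← C_pow, coeff_C_mul, coeff_map, map_mul, Algebra.smul_def,
      AdjoinRoot.algebraMap_eq]
    ring
  have hzero := eq_zero_of_sum_root_pow_mul hcoeff hn0 hn
  exact (mul_eq_zero.mp hzero).resolve_left (inv_ne_zero (natCast_factorial_ne_zero (by lia)))

end TruncExp

section TruncLog
variable {p : ℕ} [Fact p.Prime] {R : Type*} [CommRing R]

/-- The truncation `∑_{0 < l < n} X ^ l / l` of `-log (1 - X)`. As `Ring.inverse` vanishes on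
non-units, the terms with `l` not invertible in `R` are omitted. -/
noncomputable def truncLog (R : Type*) [CommRing R] (n : ℕ) : R[X] :=
  ∑ l ∈ range n, C (l : R)⁻¹ʳ * X ^ l

lemma coeff_truncLog (n l : ℕ) :
    (truncLog R n).coeff l = if l < n then (l : R)⁻¹ʳ else 0 := by
  simp only [truncLog, finsetSum_coeff, coeff_C_mul, coeff_X_pow, mul_ite, mul_one, mul_zero,
    sum_ite_eq, mem_range]

lemma coeff_zero_truncLog_pow (n : ℕ) {k : ℕ} (hk : k ≠ 0) :
    (truncLog R n ^ k).coeff 0 = 0 := by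
  rw [coeff_zero_eq_eval_zero, eval_pow, ← coeff_zero_eq_eval_zero, coeff_truncLog, Nat.cast_zero,
    Ring.inverse_zero, ite_self, zero_pow hk]

lemma X_mul_derivative_truncLog {n : ℕ} (hunit : ∀ l ∈ Ico 1 n, IsUnit (l : R)) :
    X * derivative (truncLog R n) = ∑ l ∈ Ico 1 n, X ^ l := by
  rcases n.eq_zero_or_pos with rfl | hn
  · simp [truncLog]
  rw [truncLog, derivative_sum, mul_sum, range_eq_Ico, sum_eq_sum_Ico_succ_bot hn]
  simp only [derivative_C_mul, pow_zero, derivative_one, mul_zero, zero_add]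
  refine sum_congr rfl fun l hl => ?_
  rw [mul_left_comm, X_mul_derivative_X_pow, ← mul_assoc, ← C_mul,
    Ring.inverse_mul_cancel _ (hunit l hl), C_1, one_mul]

lemma X_mul_one_sub_X_mul_derivative_truncLog {n : ℕ} (hn : 0 < n)
    (hunit : ∀ l ∈ Ico 1 n, IsUnit (l : R)) :
    X * (1 - X) * derivative (truncLog R n) = X - X ^ n := by
  rw [mul_right_comm, X_mul_derivative_truncLog hunit, mul_comm, ← neg_sub X, neg_mul, mul_comm,
    geom_sum_Ico_mul _ hn, pow_one, neg_sub]

lemma contract_truncLog_eq_zero : contract p (truncLog (ZMod p) p) = 0 := by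
  ext k
  rw [coeff_contract (Fact.out : p.Prime).ne_zero, coeff_truncLog, Nat.cast_mul,
    CharP.cast_eq_zero (ZMod p) p, mul_zero, Ring.inverse_zero, ite_self, coeff_zero]

lemma contract_pow_six (hp : 7 < p) {F : (ZMod p)[X]}
    (hF : X * (1 - X) * derivative F = X - X ^ p) (hF₁ : contract p F = 0) :
    contract p (F ^ 6) = 10 * contract p (F ^ 3) ^ 2 := by
  have htwo : (2 : (ZMod p)[X]) ≠ 0 := by
    have h := (isUnit_natCast_zmod (p := p) (l := 2) (mem_Ico.mpr (by lia))).ne_zero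
    exact_mod_cast C_ne_zero.mpr h
  have h₀ : contract p (F ^ 0) = 1 := by rw [pow_zero, ← C_1, contract_C]
  have hF₁' : contract p (F ^ 1) = 0 := by rw [pow_one, hF₁]
  have h₂ := sum_choose_mul_contract_pow_mul_contract_pow_eq_zero hF (n := 2) (by lia) (by lia)
  have h₆ := sum_choose_mul_contract_pow_mul_contract_pow_eq_zero hF (n := 6) (by lia) (by lia)
  simp only [sum_range_succ, sum_range_zero, h₀, hF₁', Nat.choose] at h₂ h₆
  have hF₂ : contract p (F ^ 2) = 0 :=
    mul_left_cancel₀ htwo (by push_cast at h₂; linear_combination h₂)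
  rw [hF₂] at h₆
  exact mul_left_cancel₀ htwo (by push_cast at h₆; linear_combination h₆)

lemma coeff_truncLog_zmod {l : ℕ} (hl : l ≤ p) :
    (truncLog (ZMod p) p).coeff l = (l : ZMod p)⁻¹ := by
  rw [coeff_truncLog, Ring.inverse_eq_inv']
  split_ifs with h
  · rfl
  · rw [le_antisymm hl (not_lt.mp h), CharP.cast_eq_zero, inv_zero]

lemma natDegree_truncLog_le (R : Type*) [CommRing R] (n : ℕ) : (truncLog R n).natDegree ≤ n - 1 :=
  natDegree_le_iff_coeff_eq_zero.mpr fun l hl => by rw [coeff_truncLog, if_neg (by lia)]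

lemma reflect_truncLog : reflect p (truncLog (ZMod p) p) = -truncLog (ZMod p) p := by
  ext l
  rw [coeff_reflect, coeff_neg]
  rcases le_or_gt l p with hl | hl
  · rw [revAt_le hl, coeff_truncLog_zmod hl, coeff_truncLog_zmod (Nat.sub_le p l),
      Nat.cast_sub hl, CharP.cast_eq_zero, zero_sub, inv_neg]
  · rw [revAt_eq_self_of_lt hl, coeff_truncLog, if_neg hl.not_gt, neg_zero]

lemma reflect_truncLog_pow (n : ℕ) :
    reflect (p * n) (truncLog (ZMod p) p ^ n) = (-1) ^ n * truncLog (ZMod p) p ^ n := by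
  induction n with
  | zero => simp only [mul_zero, pow_zero, reflect_one, one_mul]
  | succ n ih =>
    have hdegree := (natDegree_truncLog_le (ZMod p) p).trans (Nat.sub_le p 1)
    have hdegree_pow : (truncLog (ZMod p) p ^ n).natDegree ≤ p * n := by
      rw [mul_comm]; exact natDegree_pow_le_of_le n hdegree
    rw [pow_succ, mul_add_one, reflect_mul _ _ hdegree_pow hdegree, ih,
      reflect_truncLog]
    ring

lemma contract_truncLog_pow_three :
    contract p (truncLog (ZMod p) p ^ 3) =
      C ((truncLog (ZMod p) p ^ 3).coeff p) * (X - X ^ 2) := by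
  have hp := (Fact.out : p.Prime).pos
  have hreflect := congrArg (coeff · (p * 2)) (reflect_truncLog_pow (p := p) 3)
  have hneg : ((-1) ^ 3 : (ZMod p)[X]) = C (-1) := by simp [pow_succ]
  have hsub : p * 3 - p * 2 = p := by lia
  simp only [coeff_reflect, revAt_le (by lia : p * 2 ≤ p * 3), hsub, hneg, coeff_C_mul] at hreflect
  ext k
  rw [coeff_contract hp.ne', coeff_C_mul, coeff_sub, coeff_X, coeff_X_pow]
  rcases Nat.lt_or_ge k 3 with hk | hk
  · interval_cases k
    · simp [coeff_zero_truncLog_pow]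
    · simp
    · simp [hreflect, mul_comm]
  · have hdegree : (truncLog (ZMod p) p ^ 3).natDegree ≤ 3 * (p - 1) :=
      natDegree_pow_le_of_le 3 (natDegree_truncLog_le _ p)
    have hlt : 3 * (p - 1) < k * p := by
      calc 3 * (p - 1) < 3 * p := by lia
        _ ≤ k * p := Nat.mul_le_mul_right p hk
    rw [coeff_eq_zero_of_natDegree_lt (hdegree.trans_lt hlt), if_neg (by lia), if_neg (by lia),
      sub_zero, mul_zero]

lemma natCast_mul_coeff_truncLog_sq {a : ℕ} (ha : a < p) :
    a * (truncLog (ZMod p) p ^ 2).coeff a = 2 * ∑ j ∈ range a, (j : ZMod p)⁻¹ := by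
  have hderiv : X * derivative (truncLog (ZMod p) p ^ 2) =
      C 2 * (truncLog (ZMod p) p * ∑ l ∈ Ico 1 p, X ^ l) := by
    rw [← X_mul_derivative_truncLog fun l hl => isUnit_natCast_zmod hl, derivative_pow,
      Nat.cast_ofNat]
    ring
  have hgeom (n : ℕ) : (∑ l ∈ Ico 1 p, (X : (ZMod p)[X]) ^ l).coeff n =
      if n ∈ Ico 1 p then 1 else 0 := by
    simp only [finsetSum_coeff, coeff_X_pow, sum_ite_eq]
  rw [← coeff_X_mul_derivative, hderiv, coeff_C_mul, coeff_mul,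
    Nat.sum_antidiagonal_eq_sum_range_succ_mk, sum_range_succ, Nat.sub_self, hgeom,
    if_neg (by simp), mul_zero, add_zero]
  congr 1
  refine sum_congr rfl fun j hj => ?_
  have hja := mem_range.mp hj
  rw [coeff_truncLog_zmod (by lia), hgeom, if_pos (mem_Ico.mpr (by lia)), mul_one]

lemma coeff_truncLog_pow_three : (truncLog (ZMod p) p ^ 3).coeff p =
    -2 * ∑ a ∈ Ico 1 p, ((a : ZMod p)⁻¹) ^ 2 * ∑ j ∈ range a, (j : ZMod p)⁻¹ := by
  have hp := (Fact.out : p.Prime).pos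
  rw [pow_succ, coeff_mul, Nat.sum_antidiagonal_eq_sum_range_succ_mk, sum_range_succ, range_eq_Ico,
    sum_eq_sum_Ico_succ_bot hp, mul_sum,
    coeff_zero_truncLog_pow p two_ne_zero, zero_mul, zero_add, Nat.sub_self,
    coeff_truncLog_zmod hp.le, Nat.cast_zero, inv_zero, mul_zero, add_zero]
  refine sum_congr rfl fun a ha => ?_
  have hap := mem_Ico.mp ha
  have hne := (isUnit_natCast_zmod ha).ne_zero
  have hsq := natCast_mul_coeff_truncLog_sq (p := p) hap.2
  rw [coeff_truncLog_zmod (Nat.sub_le p a), Nat.cast_sub hap.2.le, CharP.cast_eq_zero, zero_sub,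
    inv_neg, mul_comm, mul_left_comm, ← mul_right_inj' hne]
  simp only
  generalize ∑ j ∈ range a, (j : ZMod p)⁻¹ = H at hsq ⊢
  field_simp
  linear_combination -hsq

end TruncLog

section Bernoulli
variable {p : ℕ} [Fact p.Prime]

lemma norm_bernoulli_le_one {j : ℕ} (hj : j < p - 1) : ‖((bernoulli j : ℚ) : ℚ_[p])‖ ≤ 1 := by
  induction j using Nat.strong_induction_on with
  | _ j ih =>
    have hrec : ((j + 1 : ℕ) : ℚ_[p]) * (bernoulli j : ℚ) = (if j + 1 = 1 then 1 else 0) -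
        ∑ k ∈ range j, ((j + 1).choose k : ℚ_[p]) * (bernoulli k : ℚ) := by
      have hsum := congrArg (Rat.cast (K := ℚ_[p])) (sum_bernoulli (j + 1))
      rw [sum_range_succ, Nat.choose_succ_self_right] at hsum
      push_cast at hsum ⊢
      rw [eq_sub_iff_add_eq', hsum]
      split_ifs <;> simp
    have hunit : ‖((j + 1 : ℕ) : ℚ_[p])‖ = 1 := by
      rw [Padic.norm_natCast_eq_one_iff, Nat.Prime.coprime_iff_not_dvd Fact.out]
      exact Nat.not_dvd_of_pos_of_lt j.succ_pos (by lia)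
    rw [← one_mul ‖((bernoulli j : ℚ) : ℚ_[p])‖, ← hunit, ← norm_mul, hrec, hunit]
    refine (PadicInt.subring p).sub_mem ?_ (sum_mem fun k hk => ?_)
    · split_ifs
      exacts [one_mem _, zero_mem _]
    · have hkj := mem_range.mp hk
      exact mul_mem (natCast_mem _ _) (ih k hkj (by lia))

open Classical in
/-- The Bernoulli number `B_j` as a `p`-adic integer; the junk value `0` is taken when `B_j` is not
`p`-integral. -/
noncomputable def padicBernoulli (p : ℕ) [Fact p.Prime] (j : ℕ) : ℤ_[p] :=
  if h : ‖((bernoulli j : ℚ) : ℚ_[p])‖ ≤ 1 then (⟨_, h⟩ : ℤ_[p]) else 0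

lemma coe_padicBernoulli {j : ℕ} (hj : j < p - 1) :
    (padicBernoulli p j : ℚ_[p]) = (bernoulli j : ℚ) :=
  congrArg Subtype.val (dif_pos (norm_bernoulli_le_one hj))

lemma succ_mul_sum_range_pow_eq_padicBernoulli {k : ℕ} (hk : k < p - 1) (n : ℕ) :
    ((k + 1 : ℕ) : ℤ_[p]) * ∑ i ∈ range n, (i : ℤ_[p]) ^ k =
      ∑ j ∈ range (k + 1), padicBernoulli p j * (k + 1).choose j * (n : ℤ_[p]) ^ (k + 1 - j) := by
  have hfaulhaber : ((k + 1 : ℕ) : ℚ) * ∑ i ∈ range n, (i : ℚ) ^ k =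
      ∑ j ∈ range (k + 1), bernoulli j * (k + 1).choose j * (n : ℚ) ^ (k + 1 - j) := by
    have hne : ((k : ℚ) + 1) ≠ 0 := k.cast_add_one_ne_zero
    rw [sum_range_pow, ← sum_div, Nat.cast_succ, mul_div_cancel₀ _ hne]
  have hpadic := congrArg (Rat.cast (K := ℚ_[p])) hfaulhaber
  apply PadicInt.ext
  simp only [PadicInt.coe_mul, PadicInt.coe_sum, PadicInt.coe_pow, PadicInt.coe_natCast]
  have hcoe : ∀ j ∈ range (k + 1), (padicBernoulli p j : ℚ_[p]) = (bernoulli j : ℚ) := fun j hj =>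
    coe_padicBernoulli (mem_range_succ_iff.mp hj |>.trans_lt hk)
  push_cast at hpadic ⊢
  rw [hpadic]
  exact sum_congr rfl fun j hj => by rw [hcoe j hj]

lemma inv_eq_pow_card_sub_two (hp : 2 < p) (a : ZMod p) : a⁻¹ = a ^ (p - 2) := by
  rcases eq_or_ne a 0 with rfl | ha
  · rw [inv_zero, zero_pow (by lia)]
  · rw [inv_eq_iff_eq_inv, ← mul_eq_one_iff_eq_inv₀ (pow_ne_zero _ ha), ← pow_succ']
    rw [show p - 2 + 1 = p - 1 by lia, ZMod.pow_card_sub_one_eq_one ha]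

lemma natCast_choose_two_card_sub_one (hp : 2 < p) : ((p - 1).choose 2 : ZMod p) = 1 := by
  have hpascal : (p - 1).choose 1 + (p - 1).choose 2 = p.choose 2 := by
    rw [← Nat.choose_succ_succ', Nat.sub_add_cancel (by lia : 1 ≤ p)]
  have hmod := congrArg (Nat.cast (R := ZMod p)) hpascal
  rw [Nat.cast_add, Nat.choose_one_right, Nat.cast_sub (by lia), CharP.cast_eq_zero,
    (ZMod.natCast_eq_zero_iff _ p).mpr ((Fact.out : p.Prime).dvd_choose_self two_ne_zero hp)]
    at hmod
  linear_combination hmod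

lemma sum_range_inv_eq_neg_sum_padicBernoulli (hp : 2 < p) (a : ℕ) :
    ∑ j ∈ range a, (j : ZMod p)⁻¹ = -∑ j ∈ range (p - 1),
      PadicInt.toZMod (padicBernoulli p j) * (p - 1).choose j * (a : ZMod p) ^ (p - 1 - j) := by
  have hneg_one : ((p - 1 : ℕ) : ZMod p) = -1 := by
    rw [Nat.cast_sub (by lia), CharP.cast_eq_zero, Nat.cast_one, zero_sub]
  have hfaulhaber := congrArg PadicInt.toZMod
    (succ_mul_sum_range_pow_eq_padicBernoulli (p := p) (k := p - 2) (by lia) a)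
  rw [show p - 2 + 1 = p - 1 by lia] at hfaulhaber
  simp only [map_mul, map_sum, map_pow, map_natCast, hneg_one] at hfaulhaber
  rw [← hfaulhaber, neg_one_mul, neg_neg]
  exact sum_congr rfl fun j _ => inv_eq_pow_card_sub_two hp _

lemma sum_inv_sq_mul_sum_inv (hp : 3 < p) :
    ∑ a ∈ Ico 1 p, (a : ZMod p)⁻¹ ^ 2 * ∑ j ∈ range a, (j : ZMod p)⁻¹ =
      PadicInt.toZMod (padicBernoulli p (p - 3)) := by
  have hpower (a j : ℕ) (ha : a ∈ Ico 1 p) (hj : j ∈ range (p - 1)) :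
      (a : ZMod p)⁻¹ ^ 2 * (a : ZMod p) ^ (p - 1 - j) = (a : ZMod p) ^ (2 * p - 4 - j) := by
    have hne := (isUnit_natCast_zmod ha).ne_zero
    have hfermat := ZMod.pow_card_sub_one_eq_one hne
    rw [inv_pow, inv_mul_eq_iff_eq_mul₀ (pow_ne_zero 2 hne), ← pow_add,
      show 2 + (2 * p - 4 - j) = (p - 1) + (p - 1 - j) by have := mem_range.mp hj; lia,
      pow_add, hfermat, one_mul]
  calc ∑ a ∈ Ico 1 p, (a : ZMod p)⁻¹ ^ 2 * ∑ j ∈ range a, (j : ZMod p)⁻¹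
      = -∑ j ∈ range (p - 1), PadicInt.toZMod (padicBernoulli p j) * (p - 1).choose j *
          ∑ a ∈ Ico 1 p, (a : ZMod p) ^ (2 * p - 4 - j) := by
        simp only [sum_range_inv_eq_neg_sum_padicBernoulli (show 2 < p by lia), mul_neg,
          sum_neg_distrib, mul_sum]
        rw [sum_comm]
        refine congrArg _ (sum_congr rfl fun j hj => sum_congr rfl fun a ha => ?_)
        rw [← hpower a j ha hj]
        ring
    _ = PadicInt.toZMod (padicBernoulli p (p - 3)) := by
        rw [sum_eq_single_of_mem (p - 3) (mem_range.mpr (by lia)) fun j hj hne => ?_]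
        · rw [sum_Ico_natCast_pow, if_pos (by rw [show 2 * p - 4 - (p - 3) = p - 1 by lia]),
            Nat.choose_symm_of_eq_add (show p - 1 = p - 3 + 2 by lia),
            natCast_choose_two_card_sub_one (by lia)]
          ring
        · rw [sum_Ico_natCast_pow, if_neg ?_, mul_zero]
          rintro ⟨c, hc⟩
          have hjp := mem_range.mp hj
          have hc1 : c = 1 := by
            have hc0 : c ≠ 0 := by rintro rfl; lia
            have hc2 : c < 2 := by
              by_contra! h
              have := Nat.mul_le_mul_left (p - 1) h
              lia
            lia
          rw [hc1] at hc
          lia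
theorem contract_truncLog_pow_six (hp : 7 < p) : contract p (truncLog (ZMod p) p ^ 6) =
    C (40 * PadicInt.toZMod (padicBernoulli p (p - 3)) ^ 2) * (X * (1 - X)) ^ 2 := by
  rw [contract_pow_six hp (X_mul_one_sub_X_mul_derivative_truncLog (by lia)
      fun l hl => isUnit_natCast_zmod hl) contract_truncLog_eq_zero, contract_truncLog_pow_three,
    coeff_truncLog_pow_three, sum_inv_sq_mul_sum_inv (by lia)]
  simp only [map_mul, map_pow, map_neg, map_ofNat]
  ring

end Bernoulli

section GeomSum
variable {R : Type*} [CommRing R]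

lemma coeff_expand_mul_powerSeries {q : ℕ} (hq : q ≠ 0) (P : R[X]) (ψ : PowerSeries R) (m : ℕ) :
    PowerSeries.coeff (m * q) (((expand R q P : R[X]) : PowerSeries R) * ψ) =
      PowerSeries.coeff m ((P : PowerSeries R) *
        PowerSeries.mk fun n => PowerSeries.coeff (n * q) ψ) := by
  induction P using Polynomial.induction_on' with
  | add P₁ P₂ h₁ h₂ => simp only [map_add, Polynomial.coe_add, add_mul, h₁, h₂]
  | monomial i a =>
    rw [expand_monomial]
    simp only [← C_mul_X_pow_eq_monomial, Polynomial.coe_mul, Polynomial.coe_C,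
      Polynomial.coe_pow, Polynomial.coe_X, mul_assoc, PowerSeries.coeff_C_mul,
      PowerSeries.coeff_X_pow_mul', PowerSeries.coeff_mk,
      Nat.mul_le_mul_right_iff (Nat.pos_of_ne_zero hq), Nat.sub_mul]

lemma prod_Icc_natCast_add (r d : ℕ) :
    ∏ s ∈ Icc 1 d, ((r : R) + s) = d ! * (r + d).choose d := by
  rw [← Nat.cast_mul, ← Nat.ascFactorial_eq_factorial_mul_choose, Nat.ascFactorial_eq_prod_range,
    range_eq_Ico, Nat.cast_prod, ← Ico_add_one_right_eq_Icc, ← prod_Ico_add' _ 0 d 1]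
  exact prod_congr rfl fun i _ => by push_cast; ring

lemma mk_prod_Icc_add_sub {d k : ℕ} (hk : k ∈ Icc 1 d) :
    PowerSeries.mk (fun n => ∏ s ∈ Icc 1 d, ((n : R) + s - k)) =
      PowerSeries.C (d ! : R) * (PowerSeries.X ^ k * PowerSeries.mk 1 ^ (d + 1)) := by
  ext n
  rw [PowerSeries.coeff_mk, PowerSeries.coeff_C_mul, PowerSeries.coeff_X_pow_mul',
    PowerSeries.mk_one_pow_eq_mk_choose_add, PowerSeries.coeff_mk]
  split_ifs with hkn
  · obtain ⟨r, rfl⟩ := Nat.exists_eq_add_of_le hkn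
    rw [Nat.add_sub_cancel_left, add_comm d r, ← prod_Icc_natCast_add]
    refine prod_congr rfl fun s _ => ?_
    push_cast
    ring
  · have hk' := mem_Icc.mp hk
    rw [mul_zero, prod_eq_zero (mem_Icc.mpr (⟨by lia, by lia⟩ : 1 ≤ k - n ∧ k - n ≤ d))]
    rw [Nat.cast_sub (by lia), add_sub_cancel, sub_self]

lemma mul_prod_add_of_sq_eq_zero {ι : Type*} {x : R} (hx : x ^ 2 = 0) (s : Finset ι) (f : ι → R) :
    x * ∏ i ∈ s, (x + f i) = x * ∏ i ∈ s, f i := by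
  classical
  induction s using Finset.induction_on with
  | empty => simp
  | insert i s hi ih =>
    rw [prod_insert hi, prod_insert hi]
    linear_combination f i * ih + (∏ j ∈ s, (x + f j)) * hx

lemma mk_natCast_mul_one_sub_X_sq :
    (PowerSeries.mk fun n => (n : R)) * (1 - PowerSeries.X) ^ 2 = PowerSeries.X := by
  have hmk : (PowerSeries.mk fun n => (n : R)) = PowerSeries.X * PowerSeries.mk 1 ^ 2 := by
    ext n
    rcases n with - | n
    · simp
    · rw [PowerSeries.mk_one_pow_eq_mk_choose_add R 1, PowerSeries.coeff_succ_X_mul]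
      simp [add_comm]
  rw [hmk, mul_assoc, ← mul_pow, PowerSeries.mk_one_mul_one_sub_eq_one, one_pow, mul_one]

lemma coe_geom_sum_X (q : ℕ) : ((∑ a ∈ range q, X ^ a : R[X]) : PowerSeries R) =
    ((expand R q (1 - X) : R[X]) : PowerSeries R) * PowerSeries.mk 1 := by
  rw [map_sub, map_one, expand_X, ← geom_sum_mul_neg X q, Polynomial.coe_mul, mul_assoc,
    Polynomial.coe_sub, Polynomial.coe_one, Polynomial.coe_X, mul_comm (1 - _),
    PowerSeries.mk_one_mul_one_sub_eq_one, mul_one]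

lemma prod_Icc_natCast_mul_add_sub {q d k : ℕ} (hq : (q : R) ^ 2 = 0) (hk : k ∈ Icc 1 d) (n : ℕ) :
    ∏ s ∈ Icc 1 d, (((n * q : ℕ) : R) + s - k) =
      q * (∏ s ∈ (Icc 1 d).erase k, ((s : R) - k)) * n := by
  have hsq : ((n * q : ℕ) : R) ^ 2 = 0 := by rw [Nat.cast_mul, mul_pow, hq, mul_zero]
  simp only [add_sub_assoc]
  rw [← mul_prod_erase _ _ hk, sub_self, add_zero, mul_prod_add_of_sq_eq_zero hsq, Nat.cast_mul]
  ring

lemma factorial_mul_coeff_X_pow_mul_geom_sum_pow {q d k : ℕ} (hq : q ≠ 0) (hq2 : (q : R) ^ 2 = 0)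
    (hk : k ∈ Icc 1 (d + 1)) (m : ℕ) :
    (d + 1)! * (X ^ k * (∑ a ∈ range q, X ^ a) ^ (d + 2) : R[X]).coeff (m * q) =
      q * (∏ s ∈ (Icc 1 (d + 1)).erase k, ((s : R) - k)) * (X * (1 - X) ^ d : R[X]).coeff m := by
  have hseries : PowerSeries.C ((d + 1)! : R) *
        ((X ^ k * (∑ a ∈ range q, X ^ a) ^ (d + 2) : R[X]) : PowerSeries R) =
      ((expand R q ((1 - X) ^ (d + 2)) : R[X]) : PowerSeries R) *
        PowerSeries.mk fun n => ∏ s ∈ Icc 1 (d + 1), ((n : R) + s - k) := by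
    rw [mk_prod_Icc_add_sub hk, Polynomial.coe_mul, Polynomial.coe_pow, Polynomial.coe_pow,
      coe_geom_sum_X, map_pow, Polynomial.coe_pow, Polynomial.coe_X]
    ring
  have hsection : (PowerSeries.mk fun n : ℕ =>
        (q : R) * (∏ s ∈ (Icc 1 (d + 1)).erase k, ((s : R) - k)) * n) =
      PowerSeries.C (q * ∏ s ∈ (Icc 1 (d + 1)).erase k, ((s : R) - k)) *
        PowerSeries.mk fun n => (n : R) := by
    ext n
    simp only [PowerSeries.coeff_mk, PowerSeries.coeff_C_mul]
  have hpoly : ((1 - X) ^ (d + 2) : R[X]) * (PowerSeries.mk fun n => (n : R)) =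
      ((X * (1 - X) ^ d : R[X]) : PowerSeries R) := by
    simp only [Polynomial.coe_mul, Polynomial.coe_pow, Polynomial.coe_sub, Polynomial.coe_one,
      Polynomial.coe_X]
    rw [add_comm, pow_add, mul_right_comm, mul_comm _ (PowerSeries.mk _),
      mk_natCast_mul_one_sub_X_sq]
  rw [← Polynomial.coeff_coe, ← PowerSeries.coeff_C_mul, hseries, coeff_expand_mul_powerSeries hq]
  simp only [PowerSeries.coeff_mk, prod_Icc_natCast_mul_add_sub hq2 hk]
  rw [hsection, mul_left_comm, PowerSeries.coeff_C_mul, hpoly, Polynomial.coeff_coe]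

end GeomSum

section Lifting
variable {R : Type*} [CommRing R]

lemma inverse_add_of_sq_eq_zero {x ε : R} (hε : ε ^ 2 = 0) (hx : IsUnit x ∨ x = 0) :
    (x + ε)⁻¹ʳ = x⁻¹ʳ - ε * x⁻¹ʳ ^ 2 := by
  rcases hx with hx | rfl
  · have hmul : (x + ε) * (x⁻¹ʳ - ε * x⁻¹ʳ ^ 2) = 1 := by
      linear_combination (1 - ε * x⁻¹ʳ) * Ring.mul_inverse_cancel x hx - x⁻¹ʳ ^ 2 * hε
    rw [← one_mul (x + ε)⁻¹ʳ, ← hmul, mul_right_comm,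
      Ring.mul_inverse_cancel _ (.of_mul_eq_one _ hmul), one_mul]
  · nontriviality R
    have hunit : ¬ IsUnit ε := fun h => not_isUnit_zero (hε ▸ h.pow 2)
    rw [zero_add, Ring.inverse_non_unit _ hunit, Ring.inverse_zero]
    ring

lemma sum_range_mul {M : Type*} [AddCommMonoid M] (f : ℕ → M) (K q : ℕ) :
    ∑ n ∈ range (K * q), f n = ∑ a ∈ range K, ∑ l ∈ range q, f (a * q + l) := by
  induction K with
  | zero => simp
  | succ K ih => rw [Nat.succ_mul, sum_range_add, sum_range_succ, ih]

/-- The truncated dilogarithm `∑_{0 < l < n} X ^ l / l ^ 2`, with the convention of `truncLog` for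
the non-invertible `l`. -/
noncomputable def truncDilog (R : Type*) [CommRing R] (n : ℕ) : R[X] :=
  ∑ l ∈ range n, C ((l : R)⁻¹ʳ ^ 2) * X ^ l

lemma natDegree_truncDilog_le (R : Type*) [CommRing R] (n : ℕ) :
    (truncDilog R n).natDegree ≤ n - 1 :=
  natDegree_sum_le_of_forall_le _ _ fun l hl =>
    (natDegree_C_mul_X_pow_le _ l).trans (Nat.le_sub_one_of_lt (mem_range.mp hl))

lemma truncLog_mul {q : ℕ} (hq : (q : R) ^ 2 = 0) (hunit : ∀ l ∈ Ico 1 q, IsUnit (l : R)) (K : ℕ) :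
    truncLog R (K * q) = truncLog R q * expand R q (∑ a ∈ range K, X ^ a) -
      C (q : R) * (truncDilog R q * expand R q (X * derivative (∑ a ∈ range K, X ^ a))) := by
  have hcoeff (a : ℕ) {l : ℕ} (hl : l ∈ range q) :
      ((a * q + l : ℕ) : R)⁻¹ʳ = (l : R)⁻¹ʳ - (a * q) * (l : R)⁻¹ʳ ^ 2 := by
    rw [add_comm, Nat.cast_add, Nat.cast_mul,
      inverse_add_of_sq_eq_zero (by rw [mul_pow, hq, mul_zero])]
    rcases l.eq_zero_or_pos with rfl | hl0
    · exact .inr Nat.cast_zero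
    · exact .inl (hunit l (mem_Ico.mpr ⟨hl0, mem_range.mp hl⟩))
  simp only [truncLog, truncDilog, mul_sum, X_mul_derivative_X_pow, map_sum, sum_mul,
    map_mul, map_pow, expand_X, expand_C]
  rw [sum_range_mul, ← sum_sub_distrib]
  refine sum_congr rfl fun a _ => ?_
  rw [← sum_sub_distrib]
  refine sum_congr rfl fun l hl => ?_
  rw [hcoeff a hl, map_sub, map_mul, map_mul, map_pow, pow_add, pow_mul', mul_comm]
  ring

lemma contract_truncLog_mul_pow {q : ℕ} (hq0 : q ≠ 0) (hq : (q : R) ^ 2 = 0)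
    (hunit : ∀ l ∈ Ico 1 q, IsUnit (l : R)) (K n : ℕ) :
    contract q (truncLog R (K * q) ^ (n + 1)) =
      contract q (truncLog R q ^ (n + 1)) * (∑ a ∈ range K, X ^ a) ^ (n + 1) -
        C (q : R) * (contract q (truncLog R q ^ n * truncDilog R q) *
          (X * derivative ((∑ a ∈ range K, X ^ a) ^ (n + 1)))) := by
  set E : R[X] := ∑ a ∈ range K, X ^ a
  set ε : R[X] := C (q : R) * (truncDilog R q * expand R q (X * derivative E)) with hε
  have hε2 : ε ^ 2 = 0 := by rw [hε, mul_pow, ← C_pow, hq, C_0, zero_mul]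
  obtain ⟨r, hr⟩ := powAddExpansion (truncLog R q * expand R q E) (-ε) (n + 1)
  rw [neg_sq, hε2, mul_zero, add_zero, Nat.add_sub_cancel] at hr
  have hpow : truncLog R (K * q) ^ (n + 1) =
      truncLog R q ^ (n + 1) * expand R q (E ^ (n + 1)) - C (q : R) *
        (truncLog R q ^ n * truncDilog R q * expand R q (X * derivative (E ^ (n + 1)))) := by
    rw [truncLog_mul hq hunit, sub_eq_add_neg, hr, hε, derivative_pow_succ]
    simp only [map_mul, map_pow, map_add, map_natCast, map_one, Nat.cast_succ]
    ring
  rw [hpow, sub_eq_add_neg, ← neg_mul, ← C_neg, contract_add hq0, contract_C_mul hq0,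
    contract_mul_expand hq0, contract_mul_expand hq0, C_neg, neg_mul, ← sub_eq_add_neg]

lemma contract_eq_sum_Icc {q n : ℕ} (hq : q ≠ 0) {F : R[X]}
    (hdegree : F.natDegree ≤ (n + 1) * (q - 1)) (hF : F.coeff 0 = 0) :
    contract q F = ∑ k ∈ Icc 1 n, C (F.coeff (k * q)) * X ^ k := by
  ext k
  simp only [coeff_contract hq, finsetSum_coeff, coeff_C_mul, coeff_X_pow, mul_ite, mul_one,
    mul_zero, sum_ite_eq]
  split_ifs with hk
  · rfl
  · rcases k.eq_zero_or_pos with rfl | hk0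
    · rw [zero_mul, hF]
    · refine coeff_eq_zero_of_natDegree_lt (hdegree.trans_lt ?_)
      have hnk : n + 1 ≤ k := by simp only [mem_Icc] at hk; lia
      calc (n + 1) * (q - 1) < (n + 1) * q := Nat.mul_lt_mul_of_pos_left (by lia) (by lia)
        _ ≤ k * q := Nat.mul_le_mul_right q hnk

lemma factorial_mul_coeff_X_pow_mul_X_mul_derivative_geom_sum_pow {q d k : ℕ} (hq : q ≠ 0)
    (hq2 : (q : R) ^ 2 = 0) (hk : k ∈ Icc 1 (d + 1)) (m : ℕ) :
    (d + 1)! * (q * (X ^ k * (X * derivative ((∑ a ∈ range q, X ^ a) ^ (d + 2))) : R[X]).coeff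
      (m * q)) = 0 := by
  set E : R[X] := (∑ a ∈ range q, X ^ a) ^ (d + 2)
  have hleibniz : X ^ k * (X * derivative E) =
      X * derivative (X ^ k * E) - C (k : R) * (X ^ k * E) := by
    rw [derivative_mul, mul_add, ← mul_assoc X, X_mul_derivative_X_pow]
    ring
  have hcoeff := factorial_mul_coeff_X_pow_mul_geom_sum_pow hq hq2 hk m
  rw [hleibniz, coeff_sub, coeff_C_mul, coeff_X_mul_derivative]
  linear_combination q * (((m * q : ℕ) : R) - k) * hcoeff + (((m * q : ℕ) : R) - k) *
    (∏ s ∈ (Icc 1 (d + 1)).erase k, ((s : R) - k)) * (X * (1 - X) ^ d : R[X]).coeff m * hq2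

theorem factorial_mul_coeff_truncLog_sq_pow {q : ℕ} (hq : q ≠ 0) (hq2 : (q : R) ^ 2 = 0)
    (hunit : ∀ l ∈ Ico 1 q, IsUnit (l : R)) (d m : ℕ) :
    (d + 1)! * (truncLog R (q ^ 2) ^ (d + 2)).coeff (m * q ^ 2) =
      q * (X * (1 - X) ^ d : R[X]).coeff m *
        ∑ k ∈ Icc 1 (d + 1), (∏ s ∈ (Icc 1 (d + 1)).erase k, ((s : R) - k)) *
          (truncLog R q ^ (d + 2)).coeff (k * q) := by
  have hdegree : (truncLog R q ^ (d + 2)).natDegree ≤ (d + 1 + 1) * (q - 1) :=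
    natDegree_pow_le_of_le _ (natDegree_truncLog_le R q)
  have hdegree_correction : (truncLog R q ^ (d + 1) * truncDilog R q).natDegree ≤
      (d + 1 + 1) * (q - 1) := by
    rw [add_one_mul]
    exact natDegree_mul_le_of_le (natDegree_pow_le_of_le _ (natDegree_truncLog_le R q))
      (natDegree_truncDilog_le R q)
  have hzero_correction : (truncLog R q ^ (d + 1) * truncDilog R q).coeff 0 = 0 := by
    rw [mul_coeff_zero, coeff_zero_truncLog_pow _ d.succ_ne_zero, zero_mul]
  rw [sq, ← mul_assoc, ← coeff_contract hq, contract_truncLog_mul_pow hq hq2 hunit,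
    contract_eq_sum_Icc hq hdegree (coeff_zero_truncLog_pow _ (d + 1).succ_ne_zero),
    contract_eq_sum_Icc hq hdegree_correction hzero_correction]
  simp only [sum_mul, mul_sum, coeff_sub, finsetSum_coeff, mul_sub, mul_assoc, coeff_C_mul]
  rw [← sum_sub_distrib]
  refine sum_congr rfl fun k hk => ?_
  have hmain := factorial_mul_coeff_X_pow_mul_geom_sum_pow hq hq2 hk m
  have hcorrection := factorial_mul_coeff_X_pow_mul_X_mul_derivative_geom_sum_pow hq hq2 hk m
  linear_combination (truncLog R q ^ (d + 2)).coeff (k * q) * hmain -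
    (truncLog R q ^ (d + 1) * truncDilog R q).coeff (k * q) * hcorrection

end Lifting

section Padic
variable {p : ℕ} [Fact p.Prime]

lemma map_truncLog {R S : Type*} [CommRing R] [CommRing S] (f : R →+* S) [IsLocalHom f] (n : ℕ) :
    (truncLog R n).map f = truncLog S n := by
  have hinverse (x : R) : f x⁻¹ʳ = (f x)⁻¹ʳ := by
    by_cases hx : IsUnit x
    · rw [← mul_one (f x⁻¹ʳ), ← Ring.mul_inverse_cancel _ (hx.map f), ← mul_assoc, ← map_mul,
        Ring.inverse_mul_cancel _ hx, map_one, one_mul]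
    · rw [Ring.inverse_non_unit _ hx, map_zero,
        Ring.inverse_non_unit _ ((isUnit_map_iff f x).not.mpr hx)]
  simp only [truncLog, Polynomial.map_sum, Polynomial.map_mul, map_C, Polynomial.map_pow, map_X,
    hinverse, map_natCast]

instance isLocalHom_toZMod : IsLocalHom (PadicInt.toZMod (p := p)) :=
  .of_surjective _ (ZMod.ringHom_surjective _)

instance isLocalHom_toZModPow_two : IsLocalHom (PadicInt.toZModPow (p := p) 2) :=
  have : Fact (1 < p ^ 2) := ⟨Nat.one_lt_pow two_ne_zero (Fact.out : p.Prime).one_lt⟩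
  .of_surjective _ (ZMod.ringHom_surjective _)

lemma toZModPow_two_natCast_mul {x y : ℤ_[p]} (h : PadicInt.toZMod x = PadicInt.toZMod y) :
    PadicInt.toZModPow 2 ((p : ℤ_[p]) * x) = PadicInt.toZModPow 2 ((p : ℤ_[p]) * y) := by
  have hdvd : (p : ℤ_[p]) ∣ x - y := by
    rw [← Ideal.mem_span_singleton, ← PadicInt.maximalIdeal_eq_span_p, ← PadicInt.ker_toZMod,
      RingHom.mem_ker, map_sub, h, sub_self]
  rw [← sub_eq_zero, ← map_sub, ← RingHom.mem_ker, PadicInt.ker_toZModPow,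
    Ideal.mem_span_singleton, ← mul_sub, sq]
  exact mul_dvd_mul_left _ hdvd

lemma sum_prod_erase_mul_coeff_truncLog_pow_six (hp : 7 < p) :
    ∑ k ∈ Icc (1 : ℕ) 5, (∏ s ∈ (Icc 1 5).erase k, ((s : ZMod p) - k)) *
      (truncLog (ZMod p) p ^ 6).coeff (k * p) =
      -800 * PadicInt.toZMod (padicBernoulli p (p - 3)) ^ 2 := by
  have hpoly : (X * (1 - X)) ^ 2 = (X ^ 2 - C 2 * X ^ 3 + X ^ 4 : (ZMod p)[X]) := by
    rw [C_ofNat]; ring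
  have hweight₂ : ∏ s ∈ (Icc (1 : ℕ) 5).erase 2, ((s : ZMod p) - (2 : ℕ)) = -6 := by
    rw [show (Icc 1 5).erase 2 = {1, 3, 4, 5} by decide]; norm_num
  have hweight₃ : ∏ s ∈ (Icc (1 : ℕ) 5).erase 3, ((s : ZMod p) - (3 : ℕ)) = 4 := by
    rw [show (Icc 1 5).erase 3 = {1, 2, 4, 5} by decide]; norm_num
  have hweight₄ : ∏ s ∈ (Icc (1 : ℕ) 5).erase 4, ((s : ZMod p) - (4 : ℕ)) = -6 := by
    rw [show (Icc 1 5).erase 4 = {1, 2, 3, 5} by decide]; norm_num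
  simp only [← coeff_contract (Fact.out : p.Prime).ne_zero, contract_truncLog_pow_six hp,
    hpoly, coeff_C_mul, coeff_add, coeff_sub, coeff_X_pow]
  rw [← sum_subset (show {2, 3, 4} ⊆ Icc 1 5 by decide)]
  · rw [sum_insert (by decide), sum_insert (by decide), sum_singleton, hweight₂, hweight₃, hweight₄]
    simp only [Nat.reduceEqDiff, if_true, if_false]
    ring
  · intro k _ hk'
    simp only [mem_insert, mem_singleton, not_or] at hk'
    rw [if_neg hk'.1, if_neg hk'.2.1, if_neg hk'.2.2]
    ring

theorem toZModPow_two_coeff_truncLog_sq_pow_six (hp : 7 < p) (m : ℕ) :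
    PadicInt.toZModPow 2 (120 * (truncLog ℤ_[p] (p ^ 2) ^ 6).coeff (m * p ^ 2)) =
      PadicInt.toZModPow 2 ((X * (1 - X) ^ 4 : ℤ_[p][X]).coeff m *
        ((p : ℤ_[p]) * (-800 * padicBernoulli p (p - 3) ^ 2))) := by
  have hsq : ((p : ℕ) : ZMod (p ^ 2)) ^ 2 = 0 := by exact_mod_cast CharP.cast_eq_zero _ (p ^ 2)
  have hunit : ∀ l ∈ Ico 1 p, IsUnit (l : ZMod (p ^ 2)) := fun l hl =>
    (ZMod.isUnit_iff_coprime l (p ^ 2)).mpr <| .pow_right 2 <| .symm <|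
      Nat.coprime_of_lt_prime (by have := mem_Ico.mp hl; lia) (mem_Ico.mp hl).2 Fact.out
  have hlift := factorial_mul_coeff_truncLog_sq_pow (Fact.out : p.Prime).ne_zero hsq hunit 4 m
  have hmod : PadicInt.toZMod (∑ k ∈ Icc (1 : ℕ) 5, (∏ s ∈ (Icc 1 5).erase k, ((s : ℤ_[p]) - k)) *
      (truncLog ℤ_[p] p ^ 6).coeff (k * p)) =
      PadicInt.toZMod (-800 * padicBernoulli p (p - 3) ^ 2) := by
    simp only [map_sum, map_mul, map_prod, map_sub, map_natCast, ← coeff_map, Polynomial.map_pow,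
      map_truncLog, sum_prod_erase_mul_coeff_truncLog_pow_six hp, map_neg, map_ofNat, map_pow]
  rw [map_mul _ (coeff _ m), ← toZModPow_two_natCast_mul hmod]
  simp only [map_sum, map_mul, map_prod, map_sub, map_natCast, ← coeff_map, Polynomial.map_pow,
      map_truncLog, Polynomial.map_mul, Polynomial.map_sub, Polynomial.map_one, map_X, map_ofNat]
  linear_combination hlift

lemma coe_inverse_natCast (l : ℕ) :
    (((l : ℤ_[p])⁻¹ʳ : ℤ_[p]) : ℚ_[p]) = if p ∣ l then 0 else 1 / (l : ℚ_[p]) := by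
  have hunit : IsUnit (l : ℤ_[p]) ↔ ¬ p ∣ l := by
    rw [PadicInt.isUnit_iff, PadicInt.norm_natCast_eq_one_iff,
      Nat.Prime.coprime_iff_not_dvd Fact.out]
  split_ifs with hl
  · rw [Ring.inverse_non_unit _ (hunit.not_left.mpr hl), PadicInt.coe_zero]
  · have hmul := congrArg PadicInt.Coe.ringHom
      (Ring.mul_inverse_cancel (l : ℤ_[p]) (hunit.mpr hl))
    rw [map_mul, map_natCast, map_one] at hmul
    exact eq_one_div_of_mul_eq_one_right hmul

lemma coeff_truncLog_pow {R : Type*} [CommRing R] (B n N : ℕ) :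
    (truncLog R B ^ n).coeff N =
      ∑ l ∈ Fintype.piFinset fun _ : Fin n => range B with ∑ i, l i = N, ∏ i, (l i : R)⁻¹ʳ := by
  have hpow : truncLog R B ^ n = ∏ _i : Fin n, ∑ l ∈ range B, C (l : R)⁻¹ʳ * X ^ l := by
    rw [prod_const, card_univ, Fintype.card_fin, truncLog]
  rw [hpow, prod_univ_sum, finsetSum_coeff, sum_filter]
  refine sum_congr rfl fun l _ => ?_
  rw [prod_mul_distrib, prod_pow_eq_pow_sum, ← map_prod, coeff_C_mul, coeff_X_pow, mul_ite, mul_one,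
    mul_zero]
  exact if_congr eq_comm rfl rfl

lemma coe_S6 (B N : ℕ) :
    ((S6 p B N : ℚ) : ℚ_[p]) = ((truncLog ℤ_[p] B ^ 6).coeff N : ℤ_[p]) := by
  have hterm (l : Fin 6 → ℕ) : ((∏ i, (l i : ℤ_[p])⁻¹ʳ : ℤ_[p]) : ℚ_[p]) =
      ∏ i, if p ∣ l i then 0 else 1 / (l i : ℚ_[p]) := by
    simp only [← coe_inverse_natCast]
    exact map_prod PadicInt.Coe.ringHom _ (univ : Finset (Fin 6))
  rw [S6, coeff_truncLog_pow, PadicInt.coe_sum, Rat.cast_sum]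
  simp only [hterm]
  refine sum_subset_zero_on_sdiff (fun l hl => ?_) (fun l hl => ?_) fun l hl => ?_
  · simp only [mem_filter, Fintype.mem_piFinset, mem_Ico, mem_range] at hl ⊢
    exact ⟨fun i => (hl.1 i).2, hl.2.1⟩
  · simp only [mem_sdiff, mem_filter, Fintype.mem_piFinset, mem_Ico, mem_range] at hl
    obtain ⟨i, hi⟩ : ∃ i, p ∣ l i := by
      by_contra! hcoprime
      exact hl.2 ⟨fun i => ⟨Nat.pos_of_ne_zero fun h => hcoprime i (h ▸ dvd_zero p), hl.1.1 i⟩,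
        hl.1.2, hcoprime⟩
    exact prod_eq_zero (mem_univ i) (if_pos hi)
  · push_cast
    exact prod_congr rfl fun i _ => (if_neg ((mem_filter.mp hl).2.2 i)).symm

lemma norm_ratCast_le_one_iff {z : ℚ} : ‖(z : ℚ_[p])‖ ≤ 1 ↔ ¬ p ∣ z.den := by
  rw [Padic.norm_rat_le_one_iff_padicValuation_le_one, Rat.padicValuation_le_one_iff]

lemma ratCong_of_toZModPow_eq {r : ℕ} {x y : ℚ} {a b : ℤ_[p]} (ha : (a : ℚ_[p]) = x)
    (hb : (b : ℚ_[p]) = y) (h : PadicInt.toZModPow r a = PadicInt.toZModPow r b) :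
    ratCong p r x y := by
  obtain ⟨c, hc⟩ : (p : ℤ_[p]) ^ r ∣ a - b := by
    rw [← Ideal.mem_span_singleton, ← PadicInt.ker_toZModPow, RingHom.mem_ker, map_sub, h, sub_self]
  have hp : (p : ℚ_[p]) ^ r ≠ 0 := pow_ne_zero r (mod_cast (Fact.out : p.Prime).ne_zero)
  have hp' : (p : ℚ) ^ r ≠ 0 := pow_ne_zero r (mod_cast (Fact.out : p.Prime).ne_zero)
  refine ⟨(x - y) / p ^ r, (mul_div_cancel₀ _ hp').symm, ?_⟩
  have hquotient : (((x - y) / p ^ r : ℚ) : ℚ_[p]) = c := by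
    have hcoe := congrArg Subtype.val hc
    push_cast at hcoe ⊢
    rw [div_eq_iff hp, ← ha, ← hb, hcoe, mul_comm]
  rw [← norm_ratCast_le_one_iff, hquotient]
  exact c.norm_le_one

lemma ratCong_of_natCast_mul {r n : ℕ} {x y : ℚ} (hn : p.Coprime n)
    (h : ratCong p r (n * x) (n * y)) : ratCong p r x y := by
  obtain ⟨z, hz, hden⟩ := h
  have hn0 : (n : ℚ) ≠ 0 := by
    rintro h
    exact (Fact.out : p.Prime).ne_one (by rwa [Nat.cast_eq_zero.mp h, Nat.coprime_zero_right] at hn)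
  refine ⟨z / n, ?_, ?_⟩
  · rw [mul_div_assoc', ← hz, ← mul_sub, mul_div_cancel_left₀ _ hn0]
  · rw [← norm_ratCast_le_one_iff] at hden ⊢
    rwa [Rat.cast_div, Rat.cast_natCast, norm_div, Padic.norm_natCast_eq_one_iff.mpr hn, div_one]

lemma coeff_one_sub_X_pow {R : Type*} [CommRing R] (d m : ℕ) :
    ((1 - X) ^ d : R[X]).coeff m = (-1) ^ m * d.choose m := by
  have hcomp : ((1 - X) ^ d : R[X]) = ((1 + X) ^ d).comp (C (-1) * X) := by
    simp only [pow_comp, add_comp, one_comp, X_comp, C_neg, C_1, neg_one_mul, ← sub_eq_add_neg]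
  rw [hcomp, comp_C_mul_X_coeff, coeff_one_add_X_pow, mul_comm]

end Padic

theorem stmt_17_general (p : ℕ) (hp : p.Prime) (hp7 : 7 < p) (m : ℕ) :
    ratCong p 2 (S6 p (p ^ 2) ((m + 1) * p ^ 2))
      (-(20 / 3 : ℚ) * ((-1) ^ m * Nat.choose 4 m) * p * bernoulli (p - 3) ^ 2) := by
  have : Fact p.Prime := ⟨hp⟩
  have hcoprime : p.Coprime 120 := by
    rw [hp.coprime_iff_not_dvd, show 120 = 2 ^ 3 * 3 * 5 by norm_num, hp.dvd_mul, hp.dvd_mul]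
    rintro ((h | h) | h)
    · exact absurd (Nat.le_of_dvd two_pos (hp.dvd_of_dvd_pow h)) (by lia)
    · exact absurd (Nat.le_of_dvd three_pos h) (by lia)
    · exact absurd (Nat.le_of_dvd (by lia) h) (by lia)
  refine ratCong_of_natCast_mul hcoprime <|
    ratCong_of_toZModPow_eq ?_ ?_ (toZModPow_two_coeff_truncLog_sq_pow_six hp7 (m + 1))
  · rw [Rat.cast_mul, coe_S6, PadicInt.coe_mul]
    norm_cast
  · have h800 : ((800 : ℤ_[p]) : ℚ_[p]) = 800 := map_ofNat PadicInt.Coe.ringHom 800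
    rw [coeff_X_mul, coeff_one_sub_X_pow]
    push_cast [coe_padicBernoulli (show p - 3 < p - 1 by lia), h800]
    ring

theorem stmt_17 (p : ℕ) (hp : p.Prime) (hp11 : 11 ≤ p) :
    ratCong p 2 (S6 p (p ^ 2) (1 * p ^ 2)) (-(20 / 3 : ℚ) * p * bernoulli (p - 3) ^ 2) ∧
    ratCong p 2 (S6 p (p ^ 2) (2 * p ^ 2)) ((80 / 3 : ℚ) * p * bernoulli (p - 3) ^ 2) ∧
    ratCong p 2 (S6 p (p ^ 2) (3 * p ^ 2)) (-(40 : ℚ) * p * bernoulli (p - 3) ^ 2) := by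
  have hgeneral := stmt_17_general p hp (by lia)
  refine ⟨?_, ?_, ?_⟩
  · convert hgeneral 0 using 1; simp
  · convert hgeneral 1 using 1; norm_num
  · convert hgeneral 2 using 1; norm_num [Nat.choose]
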